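/- arXiv:2212.09568 — 2 statements merged into one kernel-verified Lean document; each statement's English description precedes it below -/
import Mathlib

section
/- Let n ≥ 2 and 2 ≤ d ≤ n be integers with ℓ ∣ m(n−d+1), and let k := m(n−d+1)/ℓ (the maximal rank allowed by the Singleton-like bound k ≤ (m/ℓ)(n − D^H(C) + 1) for finite chain rings; codes attaining it are MDR codes). Then lim_{q→∞} δ_q^{H}(N, k, ℓ, d) = 1, the limit being over prime powers q; i.e., MDR codes in the Hamming metric are dense as q → ∞. -/
/-!
Write `A` for the small ring, `V` for the large one, `Q = q ^ ℓ` for the size of the residue field of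
`A`, `b = d - 1` and `a = n - b`, so that a code of the given rank has `|V| ^ a` elements.

A codeword vanishing on the first `a` coordinates has weight at most `b`. Hence in a code of minimum
distance at least `b + 1` the projection to the first `a` coordinates is injective, and by
cardinality bijective: the code is the graph of a unique `A`-linear map `V ^ a → V ^ b`
(`exists_graphCode_eq`). So the codes to be counted correspond to a subset of the group `H` of such
linear maps, and `numCodes ≤ |H|`.

Conversely every graph is free of the right rank, because `V` is free over `A` (`free_of_card`), so
only the maps whose graph contains a nonzero word of weight at most `b` have to be discarded. Such a
word may be multiplied by a power of the uniformizer to lie in the socle, where it has `Q - 1`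
distinct nonzero multiples. Let `T` be the socle of `V`. For a nonzero socle vector `x`, evaluation
`H → T ^ b` at `x` is surjective, since the socle of a chain ring is one-dimensional
(`exists_linearMap_socle`); so a given low-weight word `(x, y)` lies in the graph of `|H| / |T| ^ b`
maps. There are at most `2 ^ n * |T| ^ b` socle words of weight at most `b`, whence
`(Q - 1) * #bad ≤ 2 ^ n * |H|` (`card_bad_mul_le`), and the proportion of bad maps is
`O(1 / Q)`.

Finally `|H| = Q ^ (s * k * (N / ℓ - k))`, which is asymptotic to the denominator of the density
(`tendsto_NN_div`).
-/


open Filter Topology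

noncomputable def NN (s q : ℕ) (n k : ℤ) : ℝ :=
  if k < 0 then 0 else
    (q : ℝ) ^ (k * (n - k) * ((s : ℤ) - 1)) *
      ∏ i ∈ Finset.Icc 1 k.toNat, ((q : ℝ) ^ (n - (i : ℤ) + 1) - 1) / ((q : ℝ) ^ (i : ℤ) - 1)

noncomputable def mu (A : Type*) [Semiring A] {M : Type*} [AddCommMonoid M] [Module A M]
    (C : Submodule A M) : ℕ :=
  sInf {k : ℕ | ∃ f : Fin k → M, Submodule.span A (Set.range f) = C}

noncomputable def minDist {M : Type*} (D : M → M → ℝ) (C : Set M) : ℝ :=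
  sInf {r : ℝ | ∃ x ∈ C, ∃ y ∈ C, x ≠ y ∧ D x y = r}

def IsChainData (s q : ℕ) (R : Type*) [CommRing R] (γ : R) : Prop :=
  (Ideal.span {γ}).IsMaximal ∧ (∀ x : R, ¬IsUnit x → x ∈ Ideal.span {γ}) ∧
    γ ^ s = 0 ∧ γ ^ (s - 1) ≠ 0 ∧ Nat.card (R ⧸ Ideal.span {γ}) = q

def IsGaloisExtData (m card : ℕ) (R : Type*) [CommRing R] (S : Type*) [CommRing S]
    [Algebra R S] (γ : R) : Prop :=
  Module.Free R S ∧ Module.finrank R S = m ∧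
    (Ideal.span {algebraMap R S γ}).IsMaximal ∧
    (∀ x : S, ¬IsUnit x → x ∈ Ideal.span {algebraMap R S γ}) ∧
    Nat.card (S ⧸ Ideal.span {algebraMap R S γ}) = card

def IsGoodDist {S : Type*} [CommRing S] {n : ℕ} (D : (Fin n → S) → (Fin n → S) → ℝ) : Prop :=
  (∀ x y, 0 ≤ D x y) ∧ (∀ x y, (D x y = 0 ↔ x = y)) ∧ (∀ x y, D x y = D y x) ∧
    (∀ x y z, D x z ≤ D x y + D y z) ∧ (∀ x y z, D (x + z) (y + z) = D x y) ∧
    (∀ (a : S) (x : Fin n → S), D (a • x) 0 ≤ D x 0)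

noncomputable def volBall (R : Type*) [CommRing R] {S : Type*} [CommRing S] [Algebra R S]
    (γ : R) {n : ℕ} (D : (Fin n → S) → (Fin n → S) → ℝ) (d : ℕ) : ℕ :=
  Nat.card {x : Fin n → S // (∃ i, x i ∉ Ideal.span {algebraMap R S γ}) ∧ D x 0 < (d : ℝ)}

noncomputable def volBallFull {S : Type*} [CommRing S] {n : ℕ} (D : (Fin n → S) → (Fin n → S) → ℝ)
    (d : ℕ) : ℕ :=
  Nat.card {x : Fin n → S // D x 0 < (d : ℝ)}

noncomputable def volBallGamma (R : Type*) [CommRing R] {S : Type*} [CommRing S] [Algebra R S]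
    (γ : R) {n : ℕ} (D : (Fin n → S) → (Fin n → S) → ℝ) (d : ℕ) : ℕ :=
  Nat.card {x : Fin n → S // (∀ i, x i ∈ Ideal.span {algebraMap R S γ}) ∧ D x 0 < (d : ℝ)}

noncomputable def numCodes {R S : Type*} [CommRing R] [CommRing S] [Algebra R S]
    (Sbar : Subalgebra R S) {n : ℕ} (D : (Fin n → S) → (Fin n → S) → ℝ) (k d : ℕ) : ℕ :=
  Nat.card {C : Submodule ↥Sbar (Fin n → S) //
    Module.Free ↥Sbar ↥C ∧ mu ↥Sbar C = k ∧ (d : ℝ) ≤ minDist D (C : Set (Fin n → S))}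

noncomputable def numBadCodes {R S : Type*} [CommRing R] [CommRing S] [Algebra R S]
    (Sbar : Subalgebra R S) {n : ℕ} (D : (Fin n → S) → (Fin n → S) → ℝ) (k d : ℕ) : ℕ :=
  Nat.card {C : Submodule ↥Sbar (Fin n → S) //
    Module.Free ↥Sbar ↥C ∧ mu ↥Sbar C = k ∧ minDist D (C : Set (Fin n → S)) ≤ (d : ℝ) - 1}

noncomputable def densityCodes (s q ℓ : ℕ) {R S : Type*} [CommRing R] [CommRing S]
    [Algebra R S] (Sbar : Subalgebra R S) {n : ℕ} (D : (Fin n → S) → (Fin n → S) → ℝ)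
    (N k d : ℕ) : ℝ :=
  (numCodes Sbar D k d : ℝ) / NN s (q ^ ℓ) ((N / ℓ : ℕ) : ℤ) (k : ℤ)

noncomputable def hammingD {S : Type*} {n : ℕ} (x y : Fin n → S) : ℝ :=
  Nat.card {i : Fin n // x i ≠ y i}

noncomputable def rankD (R : Type*) [CommRing R] {S : Type*} [CommRing S] [Algebra R S]
    {n : ℕ} (x y : Fin n → S) : ℝ :=
  (mu R (Submodule.span R (Set.range (x - y))) : ℝ)

/-! ### Socles of free modules over chain rings -/

/-- In a chain ring of length `s`, the annihilator of `γ` is generated by `γ ^ (s - 1)`. -/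
theorem chain_exists_of_mul_eq_zero {A : Type*} [CommRing A] {γ : A} {s : ℕ}
    (hγ : γ ^ (s - 1) ≠ 0) (hloc : ∀ x : A, ¬IsUnit x → x ∈ Ideal.span {γ})
    {c : A} (hc : γ * c = 0) : ∃ u, c = γ ^ (s - 1) * u := by
  suffices h : ∀ i, i ≤ s - 1 → ∃ u, c = γ ^ i * u from h _ le_rfl
  intro i
  induction i with
  | zero => exact fun _ => ⟨c, by simp⟩
  | succ i ih =>
    intro hi
    obtain ⟨u, rfl⟩ := ih (by omega)
    by_cases hu : IsUnit u
    · exfalso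
      apply hγ
      rw [← mul_assoc, ← pow_succ', hu.mul_left_eq_zero] at hc
      exact pow_eq_zero_of_le hi hc
    · obtain ⟨v, rfl⟩ := Ideal.mem_span_singleton'.1 (hloc u hu)
      exact ⟨v, by ring⟩

/-- The socle of a chain ring is a simple module: any nonzero element of it divides all others. -/
theorem chain_socle_dvd {A : Type*} [CommRing A] {γ : A} {s : ℕ} (hs : 1 ≤ s)
    (hγs : γ ^ s = 0) (hγ : γ ^ (s - 1) ≠ 0) (hloc : ∀ x : A, ¬IsUnit x → x ∈ Ideal.span {γ})
    {c c' : A} (hc0 : c ≠ 0) (hc : γ * c = 0) (hc' : γ * c' = 0) : ∃ p, c' = c * p := by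
  obtain ⟨u, rfl⟩ := chain_exists_of_mul_eq_zero hγ hloc hc
  obtain ⟨u', rfl⟩ := chain_exists_of_mul_eq_zero hγ hloc hc'
  by_cases hu : IsUnit u
  · obtain ⟨w, hw⟩ := hu.exists_right_inv
    exact ⟨w * u', by linear_combination (-γ ^ (s - 1) * u') * hw⟩
  · exfalso
    obtain ⟨v, rfl⟩ := Ideal.mem_span_singleton'.1 (hloc u hu)
    apply hc0
    have : γ ^ (s - 1) * γ = 0 := by rw [← pow_succ, Nat.sub_add_cancel hs, hγs]
    linear_combination v * this

/-- Linear maps between finite free modules over a chain ring act transitively on nonzero socle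
vectors; this makes the values of a uniformly random linear map at such a vector equidistributed. -/
theorem exists_linearMap_socle {A M P : Type*} [CommRing A] [AddCommGroup M] [Module A M]
    [AddCommGroup P] [Module A P] [Module.Free A M] [Module.Free A P] [Module.Finite A P]
    {γ : A} {s : ℕ} (hs : 1 ≤ s)
    (hγs : γ ^ s = 0) (hγ : γ ^ (s - 1) ≠ 0) (hloc : ∀ x : A, ¬IsUnit x → x ∈ Ideal.span {γ})
    {x : M} {y : P} (hx0 : x ≠ 0) (hx : γ • x = 0) (hy : γ • y = 0) :
    ∃ f : M →ₗ[A] P, f x = y := by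
  let bM := Module.Free.chooseBasis A M
  let bP := Module.Free.chooseBasis A P
  obtain ⟨i, hi⟩ : ∃ i, bM.repr x i ≠ 0 := by
    by_contra! h
    exact hx0 (bM.repr.map_eq_zero_iff.1 (Finsupp.ext h))
  have hi' : γ * bM.repr x i = 0 := by
    have := congrArg (fun z => bM.repr z i) hx
    simpa using this
  have h : ∀ j, ∃ p, bP.repr y j = bM.repr x i * p := fun j => by
    apply chain_socle_dvd hs hγs hγ hloc hi hi'
    have := congrArg (fun z => bP.repr z j) hy
    simpa using this
  choose p hp using h
  refine ⟨(bM.coord i).smulRight (∑ j, p j • bP j), ?_⟩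
  conv_rhs => rw [← bP.sum_repr y]
  simp [Finset.smul_sum, smul_smul, hp]

/-! ### Ranks, weights and minimum distance -/

theorem mu_eq_finrank {A M : Type*} [CommRing A] [Nontrivial A] [AddCommGroup M] [Module A M]
    (C : Submodule A M) [Module.Free A C] [Module.Finite A C] : mu A C = Module.finrank A C := by
  unfold mu
  let b := Module.finBasis A C
  have hmem : ∃ f : Fin (Module.finrank A C) → M, Submodule.span A (Set.range f) = C := by
    refine ⟨C.subtype ∘ b, ?_⟩
    rw [Set.range_comp, ← Submodule.map_span, b.span_eq, Submodule.map_top, Submodule.range_subtype]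
  apply le_antisymm
  · exact Nat.sInf_le hmem
  · obtain ⟨f, hf⟩ := Nat.sInf_mem (s := {k : ℕ | ∃ f : Fin k → M, Submodule.span A (Set.range f) = C}) ⟨_, hmem⟩
    generalize sInf {k : ℕ | ∃ f : Fin k → M, Submodule.span A (Set.range f) = C} = r at f hf
    subst hf
    exact (finrank_range_le_card (R := A) f).trans_eq (Fintype.card_fin r)

theorem card_eq_pow_finrank_of_free {A M : Type*} [CommRing A] [Nontrivial A] [AddCommGroup M]
    [Module A M] [Module.Free A M] [Module.Finite A M] :
    Nat.card M = Nat.card A ^ Module.finrank A M := by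
  rw [Nat.card_congr (Module.finBasis A M).equivFun.toEquiv, Nat.card_fun, Nat.card_fin]

/-- The number of coordinates at which `z` is nonzero. -/
noncomputable def wt {V : Type*} [Zero V] {n : ℕ} (z : Fin n → V) : ℕ :=
  Nat.card {i : Fin n // z i ≠ 0}

theorem wt_smul_le {A V : Type*} [CommRing A] [AddCommGroup V] [Module A V] {n : ℕ} (c : A)
    (z : Fin n → V) : wt (c • z) ≤ wt z := by
  refine Nat.card_mono (Set.toFinite _) ?_
  intro i (hi : c • z i ≠ 0) (h : z i = 0)
  exact hi (by rw [h, smul_zero])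

theorem hammingD_eq_wt {V : Type*} [AddCommGroup V] {n : ℕ} (x y : Fin n → V) :
    hammingD x y = wt (x - y) := by
  simp [hammingD, wt, sub_ne_zero]

/-- The hypothesis `C ≠ ⊥` is needed because the infimum defining the minimum distance is `0` on the
zero code. -/
theorem le_minDist_iff {A V : Type*} [CommRing A] [AddCommGroup V] [Module A V] {n d : ℕ}
    (C : Submodule A (Fin n → V)) (hC : C ≠ ⊥) :
    (d : ℝ) ≤ minDist hammingD (C : Set (Fin n → V)) ↔ ∀ z ∈ C, z ≠ 0 → d ≤ wt z := by
  constructor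
  · intro h z hz hz0
    have : minDist hammingD (C : Set (Fin n → V)) ≤ wt z :=
      csInf_le ⟨0, by rintro r ⟨x, -, y, -, -, rfl⟩; unfold hammingD; positivity⟩
        ⟨z, hz, 0, C.zero_mem, hz0, by simp [hammingD_eq_wt]⟩
    exact_mod_cast h.trans this
  · intro h
    obtain ⟨z, hz, hz0⟩ := C.exists_mem_ne_zero_of_ne_bot hC
    refine le_csInf ⟨_, z, hz, 0, C.zero_mem, hz0, rfl⟩ ?_
    rintro r ⟨x, hx, y, hy, hxy, rfl⟩
    rw [hammingD_eq_wt]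
    exact_mod_cast h _ (C.sub_mem hx hy) (sub_ne_zero.2 hxy)

/-- A vector of weight at most `b` is determined by its support `I` and by its values on `I`, stored
in `b` slots through an injection of `I` into `Fin b`. -/
theorem card_wt_le {T : Type*} [Zero T] [Finite T] (n b : ℕ) :
    Nat.card {z : Fin n → T // wt z ≤ b} ≤ 2 ^ n * Nat.card T ^ b := by
  have he : ∀ I : Set (Fin n), Nat.card I ≤ b → ∃ e : I → Fin b, Function.Injective e :=
    fun I hI => ⟨fun i => Fin.castLE hI (Finite.equivFin I i),
      (Fin.castLE_injective hI).comp (Finite.equivFin I).injective⟩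
  choose e he using he
  let F : {z : Fin n → T // wt z ≤ b} → Set (Fin n) × (Fin b → T) := fun z =>
    ({i | z.1 i ≠ 0}, Function.extend (e {i | z.1 i ≠ 0} z.2) (fun i => z.1 i) 0)
  have hF : Function.Injective F := by
    rintro ⟨z, hz⟩ ⟨z', hz'⟩ h
    obtain ⟨h1, h2⟩ := Prod.ext_iff.1 h
    simp only [F] at h1 h2
    ext i
    by_cases hi : z i = 0
    · have : i ∉ {i | z' i ≠ 0} := by rw [← h1]; simpa using hi
      simpa [hi, eq_comm] using this
    · have key : ∀ (I J : Set (Fin n)) (hI : Nat.card I ≤ b) (hJ : Nat.card J ≤ b), I = J →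
          i ∈ I → Function.extend (e I hI) (fun i => z i) 0 =
            Function.extend (e J hJ) (fun i => z' i) 0 → z i = z' i := by
        rintro I _ hI hJ rfl hi h
        have := congrFun h (e I hI ⟨i, hi⟩)
        simpa [(he I hI).extend_apply] using this
      exact key _ _ hz hz' h1 hi h2
  refine (Nat.card_le_card_of_injective F hF).trans_eq ?_
  simp [Nat.card_prod, Nat.card_fun]

/-! ### Systematic codes -/

section Graph

variable {A V : Type*} [CommRing A] [AddCommGroup V] [Module A V] {a b : ℕ}

/-- Restriction of a word of length `a + b` to its first `a` coordinates. -/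
def headMap (A V : Type*) [CommRing A] [AddCommGroup V] [Module A V] (a b : ℕ) :
    (Fin (a + b) → V) →ₗ[A] (Fin a → V) :=
  LinearMap.funLeft A V (Fin.castAdd b)

/-- Restriction of a word of length `a + b` to its last `b` coordinates. -/
def tailMap (A V : Type*) [CommRing A] [AddCommGroup V] [Module A V] (a b : ℕ) :
    (Fin (a + b) → V) →ₗ[A] (Fin b → V) :=
  LinearMap.funLeft A V (Fin.natAdd a)

/-- The systematic code with redundancy map `f`: the words whose last `b` coordinates are the
image under `f` of their first `a` coordinates. -/
def graphCode (f : (Fin a → V) →ₗ[A] (Fin b → V)) : Submodule A (Fin (a + b) → V) :=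
  LinearMap.eqLocus (tailMap A V a b) (f ∘ₗ headMap A V a b)

theorem mem_graphCode {f : (Fin a → V) →ₗ[A] (Fin b → V)} {z : Fin (a + b) → V} :
    z ∈ graphCode f ↔ tailMap A V a b z = f (headMap A V a b z) := Iff.rfl

@[simp] theorem headMap_append (x : Fin a → V) (y : Fin b → V) :
    headMap A V a b (Fin.append x y) = x := by
  ext i; simp [headMap, LinearMap.funLeft_apply]

@[simp] theorem tailMap_append (x : Fin a → V) (y : Fin b → V) :
    tailMap A V a b (Fin.append x y) = y := by
  ext i; simp [tailMap, LinearMap.funLeft_apply]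

theorem append_head_tail (z : Fin (a + b) → V) :
    Fin.append (headMap A V a b z) (tailMap A V a b z) = z := by
  ext i
  refine Fin.addCases (fun i => ?_) (fun i => ?_) i <;>
    simp [headMap, tailMap, LinearMap.funLeft_apply]

theorem append_mem_graphCode (f : (Fin a → V) →ₗ[A] (Fin b → V)) (x : Fin a → V) :
    Fin.append x (f x) ∈ graphCode f := by
  rw [mem_graphCode, headMap_append, tailMap_append]

/-- A systematic code is parametrised by its first `a` coordinates. -/
noncomputable def graphEquiv (f : (Fin a → V) →ₗ[A] (Fin b → V)) :
    graphCode f ≃ₗ[A] (Fin a → V) :=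
  LinearEquiv.ofBijective (headMap A V a b ∘ₗ (graphCode f).subtype) (by
    constructor
    · rintro ⟨z, hz⟩ ⟨w, hw⟩ h
      replace h : headMap A V a b z = headMap A V a b w := h
      rw [mem_graphCode] at hz hw
      rw [Subtype.mk.injEq, ← append_head_tail (A := A) z, ← append_head_tail (A := A) w, hz, hw, h]
    · exact fun x => ⟨⟨_, append_mem_graphCode f x⟩, by simp⟩)

theorem graphCode_injective :
    Function.Injective (graphCode : ((Fin a → V) →ₗ[A] (Fin b → V)) → _) := by
  intro f g h
  refine LinearMap.ext fun x => ?_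
  have hx := append_mem_graphCode f x
  rw [h, mem_graphCode, headMap_append, tailMap_append] at hx
  exact hx

theorem wt_le_of_headMap_eq_zero {z : Fin (a + b) → V} (h : headMap A V a b z = 0) :
    wt z ≤ b := by
  have : ∀ i : {i // z i ≠ 0}, ∃ j : Fin b, i.1 = Fin.natAdd a j := by
    rintro ⟨i, hi⟩
    induction i using Fin.addCases with
    | left i => exact absurd (congrFun h i) hi
    | right j => exact ⟨j, rfl⟩
  choose j hj using this
  simpa [wt] using Nat.card_le_card_of_injective j
    (fun i i' hii => Subtype.ext (by rw [hj, hj, hii]))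

/-- Every code of minimum distance greater than `b` with `|V| ^ a` elements is systematic:
a codeword vanishing on the first `a` coordinates has weight at most `b`. -/
theorem exists_graphCode_eq [Finite V] (C : Submodule A (Fin (a + b) → V))
    (hcard : Nat.card C = Nat.card V ^ a) (hC : ∀ z ∈ C, z ≠ 0 → b + 1 ≤ wt z) :
    ∃ f : (Fin a → V) →ₗ[A] (Fin b → V), graphCode f = C := by
  have hinj : Function.Injective (headMap A V a b ∘ₗ C.subtype) := by
    rw [← LinearMap.ker_eq_bot, LinearMap.ker_eq_bot']
    rintro ⟨z, hz⟩ h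
    by_contra h0
    have h1 := hC z hz (fun h => h0 (Subtype.ext h))
    have h2 := wt_le_of_headMap_eq_zero (A := A) h
    omega
  have hbij := (Nat.bijective_iff_injective_and_card (headMap A V a b ∘ₗ C.subtype)).2
    ⟨hinj, by simp [hcard, Nat.card_fun]⟩
  let e := LinearEquiv.ofBijective _ hbij
  have he : ∀ w : C, e w = headMap A V a b w := fun _ => rfl
  refine ⟨tailMap A V a b ∘ₗ C.subtype ∘ₗ e.symm.toLinearMap, ?_⟩
  ext z
  rw [mem_graphCode]
  constructor
  · intro h
    have h1 : headMap A V a b (e.symm (headMap A V a b z) : C) = headMap A V a b z := by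
      rw [← he, e.apply_symm_apply]
    have h2 : ((e.symm (headMap A V a b z) : C) : Fin (a + b) → V) = z := by
      rw [← append_head_tail (A := A) ((e.symm (headMap A V a b z) : C) : Fin (a + b) → V), h1]
      exact (congrArg _ h.symm).trans (append_head_tail z)
    rw [← h2]; exact Subtype.coe_prop _
  · intro hz
    have : e.symm (headMap A V a b z) = ⟨z, hz⟩ := by rw [LinearEquiv.symm_apply_eq, he]
    simp [this]

end Graph

/-! ### Counting bad redundancy maps -/

section Counting

variable {A V : Type*} [CommRing A] [AddCommGroup V] [Module A V] {a b s : ℕ} {γ : A}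

/-- The redundancy map `f` is bad if its systematic code has a nonzero word of weight at most `b`
that is annihilated by `γ`. -/
def Bad (γ : A) (f : (Fin a → V) →ₗ[A] (Fin b → V)) : Prop :=
  ∃ x : Fin a → V, x ≠ 0 ∧ γ • x = 0 ∧ wt (Fin.append x (f x)) ≤ b

/-- A nonzero word of low weight can be multiplied by a power of `γ` to land in the socle without
vanishing, and this does not increase its weight. -/
theorem lt_wt_of_not_bad (hγs : γ ^ s = 0) {f : (Fin a → V) →ₗ[A] (Fin b → V)}
    (hf : ¬ Bad γ f) : ∀ z ∈ graphCode f, z ≠ 0 → b + 1 ≤ wt z := by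
  classical
  intro z hz hz0
  by_contra hlt
  have hex : ∃ j, γ ^ j • z = 0 := ⟨s, by rw [hγs, zero_smul]⟩
  obtain ⟨j, hj⟩ : ∃ j, Nat.find hex = j + 1 :=
    Nat.exists_eq_succ_of_ne_zero (fun h => hz0 (by simpa [h] using Nat.find_spec hex))
  -- `γ ^ j` is the last power of `γ` that does not kill `z`
  have h0 : γ ^ (j + 1) • z = 0 := hj ▸ Nat.find_spec hex
  have h1 : γ ^ j • z ≠ 0 := Nat.find_min hex (by omega)
  have hw : γ ^ j • z ∈ graphCode f := Submodule.smul_mem _ _ hz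
  set w := γ ^ j • z with hwdef
  have hγw : γ • w = 0 := by rw [hwdef, smul_smul, ← pow_succ', h0]
  have happ : Fin.append (headMap A V a b w) (f (headMap A V a b w)) = w := by
    rw [← mem_graphCode.1 hw, append_head_tail]
  refine hf ⟨headMap A V a b w, fun h => h1 ?_, by rw [← map_smul, hγw, map_zero], ?_⟩
  · rw [← happ, h, map_zero]
    ext i
    refine Fin.addCases (fun i => ?_) (fun i => ?_) i <;> simp
  · rw [happ]
    exact (wt_smul_le (γ ^ j) z).trans (by omega)

/-- Double counting of triples consisting of a bad map `f`, a nonzero multiple of a bad word `x` of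
`f`, and a socle vector `y` of length `b`. Such a triple is determined by the low-weight socle word
`(x, f x)` together with the map obtained by adding to `f` a chosen map sending `x` to `y`. -/
theorem card_bad_mul_le [Finite A] [Finite V] [Module.Free A V] (hs : 1 ≤ s)
    (hγs : γ ^ s = 0) (hγ : γ ^ (s - 1) ≠ 0) (hloc : ∀ x : A, ¬IsUnit x → x ∈ Ideal.span {γ}) :
    Nat.card {f : (Fin a → V) →ₗ[A] (Fin b → V) // Bad γ f} *
      (Nat.card (A ⧸ Ideal.span {γ}) - 1) ≤
      2 ^ (a + b) * Nat.card ((Fin a → V) →ₗ[A] (Fin b → V)) := by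
  classical
  let T := Submodule.torsionBy A V γ
  have hfinH : Finite ((Fin a → V) →ₗ[A] (Fin b → V)) := DFunLike.finite _
  have hg : ∀ (x : Fin a → V) (y : Fin b → V), ∃ g : (Fin a → V) →ₗ[A] (Fin b → V),
      x ≠ 0 → γ • x = 0 → γ • y = 0 → g x = y := by
    intro x y
    by_cases h : x ≠ 0 ∧ γ • x = 0 ∧ γ • y = 0
    · obtain ⟨g, hg⟩ := exists_linearMap_socle hs hγs hγ hloc h.1 h.2.1 h.2.2
      exact ⟨g, fun _ _ _ => hg⟩
    · exact ⟨0, fun h1 h2 h3 => absurd ⟨h1, h2, h3⟩ h⟩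
  choose g hg using hg
  -- nonzero residue classes act on a socle word through representatives, giving distinct multiples
  let K := {c : A ⧸ Ideal.span {γ} // c ≠ 0}
  have hout : ∀ c : A ⧸ Ideal.span {γ}, Ideal.Quotient.mk _ c.out = c := fun c => Quotient.out_eq c
  have hann : ∀ (c : A) (x : Fin a → V), x ≠ 0 → c • x = 0 → c ∈ Ideal.span {γ} :=
    fun c x hx0 hcx => hloc c (fun hu => hx0 (hu.smul_eq_zero.1 hcx))
  choose x₀ hx0 hxγ hxwt using fun f : {f : (Fin a → V) →ₗ[A] (Fin b → V) // Bad γ f} => f.2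
  let X : {f : (Fin a → V) →ₗ[A] (Fin b → V) // Bad γ f} → K → (Fin a → V) :=
    fun f c => (c.1.out : A) • x₀ f
  have hX0 : ∀ f c, X f c ≠ 0 := fun f c h => c.2 (by
    rw [← hout c.1, Ideal.Quotient.eq_zero_iff_mem]; exact hann _ _ (hx0 f) h)
  have hXγ : ∀ f c, γ • X f c = 0 := fun f c => by
    change γ • (c.1.out : A) • x₀ f = 0
    rw [smul_comm, hxγ, smul_zero]
  have hXinj : ∀ f, Function.Injective (X f) := fun f c c' h => by
    apply Subtype.ext
    rw [← hout c.1, ← hout c'.1, Ideal.Quotient.eq]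
    exact hann _ _ (hx0 f) (by rw [sub_smul]; exact sub_eq_zero.2 h)
  have happ : ∀ f c, Fin.append (X f c) (f.1 (X f c)) =
      (c.1.out : A) • Fin.append (x₀ f) (f.1 (x₀ f)) := fun f c => by
    ext i
    refine Fin.addCases (fun i => ?_) (fun i => ?_) i <;> simp [X]
  have hT : ∀ f c i, Fin.append (X f c) (f.1 (X f c)) i ∈ T := fun f c i => by
    rw [Submodule.mem_torsionBy_iff]
    refine Fin.addCases (fun i => ?_) (fun i => ?_) i
    · simpa using congrFun (hXγ f c) i
    · have : γ • f.1 (X f c) = 0 := by rw [← map_smul, hXγ, map_zero]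
      simpa using congrFun this i
  have hwt : ∀ f c, wt (fun i => (⟨_, hT f c i⟩ : T)) ≤ b := fun f c => by
    have h1 : wt (fun i => (⟨_, hT f c i⟩ : T)) = wt (Fin.append (X f c) (f.1 (X f c))) := by
      simp [wt]
    rw [h1, happ]
    exact (wt_smul_le _ _).trans (hxwt f)
  let Y : (Fin b → T) → (Fin b → V) := fun y i => y i
  have hY : ∀ y, γ • Y y = 0 := fun y => by
    ext i; exact (Submodule.mem_torsionBy_iff _ _).1 (y i).2
  let F : {f : (Fin a → V) →ₗ[A] (Fin b → V) // Bad γ f} × K × (Fin b → T) →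
      {z : Fin (a + b) → T // wt z ≤ b} × ((Fin a → V) →ₗ[A] (Fin b → V)) :=
    fun p => (⟨fun i => ⟨_, hT p.1 p.2.1 i⟩, hwt p.1 p.2.1⟩,
      p.1.1 + g (X p.1 p.2.1) (Y p.2.2))
  have hF : Function.Injective F := by
    rintro ⟨f, c, y⟩ ⟨f', c', y'⟩ h
    obtain ⟨h1, h2⟩ := Prod.ext_iff.1 h
    simp only [F] at h1 h2
    have h3 : Fin.append (X f c) (f.1 (X f c)) = Fin.append (X f' c') (f'.1 (X f' c')) := by
      ext i
      have := congrFun (congrArg Subtype.val h1) i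
      exact congrArg Subtype.val this
    have h4 : X f c = X f' c' := by simpa using congrArg (headMap A V a b) h3
    have h5 : f.1 (X f c) = f'.1 (X f' c') := by simpa using congrArg (tailMap A V a b) h3
    have h6 := LinearMap.congr_fun h2 (X f c)
    have h7 : Y y = Y y' := by
      rw [LinearMap.add_apply, LinearMap.add_apply, hg _ _ (hX0 f c) (hXγ f c) (hY y), h5, h4,
        hg _ _ (hX0 f' c') (hXγ f' c') (hY y')] at h6
      exact add_left_cancel h6
    have h8 : f = f' := by
      rw [h4, h7] at h2
      exact Subtype.ext (add_right_cancel h2)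
    subst h8
    have h9 : y = y' := by
      ext i; exact congrFun h7 i
    rw [hXinj f h4, h9]
  have hcard := Nat.card_le_card_of_injective F hF
  rw [Nat.card_prod, Nat.card_prod, Nat.card_prod, Nat.card_fun, Nat.card_fin] at hcard
  have hK : Nat.card K = Nat.card (A ⧸ Ideal.span {γ}) - 1 := by
    have hfinQ : Finite (A ⧸ Ideal.span {γ}) := Finite.of_surjective _ Ideal.Quotient.mk_surjective
    have := Fintype.ofFinite (A ⧸ Ideal.span {γ})
    simp [K, Nat.card_eq_fintype_card, Fintype.card_subtype_compl]
  have hTpos : 0 < Nat.card T ^ b := pow_pos Nat.card_pos _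
  have hW := card_wt_le (T := T) (a + b) b
  rw [hK] at hcard
  refine Nat.le_of_mul_le_mul_right (c := Nat.card T ^ b) ?_ hTpos
  calc _ = _ := by ring
    _ ≤ _ := hcard
    _ ≤ _ := Nat.mul_le_mul_right _ hW
    _ = _ := by ring

/-- Codes of minimum distance at least `b + 1` with `|A| ^ k = |V| ^ a` elements correspond to
redundancy maps, and all but the bad maps give such codes. -/
theorem card_codes_bounds [Finite A] [Finite V] [Nontrivial A] [Nontrivial V] [Module.Free A V]
    (hs : 1 ≤ s) (ha : 1 ≤ a) (hγs : γ ^ s = 0) (hγ : γ ^ (s - 1) ≠ 0)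
    (hloc : ∀ x : A, ¬IsUnit x → x ∈ Ideal.span {γ})
    {k : ℕ} (hk : Nat.card A ^ k = Nat.card V ^ a) :
    let c := Nat.card {C : Submodule A (Fin (a + b) → V) //
      Module.Free A C ∧ mu A C = k ∧
        ((b + 1 : ℕ) : ℝ) ≤ minDist hammingD (C : Set (Fin (a + b) → V))}
    let H := Nat.card ((Fin a → V) →ₗ[A] (Fin b → V))
    c ≤ H ∧ H * (Nat.card (A ⧸ Ideal.span {γ}) - 1) ≤
      c * (Nat.card (A ⧸ Ideal.span {γ}) - 1) + 2 ^ (a + b) * H := by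
  classical
  intro c H
  have hfinH : Finite ((Fin a → V) →ₗ[A] (Fin b → V)) := DFunLike.finite _
  have hA : 1 < Nat.card A := Finite.one_lt_card
  have hV : 1 < Nat.card V := Finite.one_lt_card
  have hbot : ∀ (C : Submodule A (Fin (a + b) → V)), Nat.card C = Nat.card V ^ a → C ≠ ⊥ := by
    rintro C hC rfl
    rw [Nat.card_unique] at hC
    exact (Nat.one_lt_pow (by omega) hV).ne hC
  have hfree : ∀ (C : Submodule A (Fin (a + b) → V)) [Module.Free A C],
      mu A C = k ↔ Nat.card C = Nat.card V ^ a := by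
    intro C _
    rw [mu_eq_finrank, card_eq_pow_finrank_of_free (A := A) (M := C), ← hk]
    exact (Nat.pow_right_injective hA).eq_iff.symm
  have hup : ∀ C : {C : Submodule A (Fin (a + b) → V) //
      Module.Free A C ∧ mu A C = k ∧
        ((b + 1 : ℕ) : ℝ) ≤ minDist hammingD (C : Set (Fin (a + b) → V))},
      ∃ f : (Fin a → V) →ₗ[A] (Fin b → V), graphCode f = C.1 := by
    rintro ⟨C, h1, h2, h3⟩
    rw [hfree] at h2
    exact exists_graphCode_eq C h2 ((le_minDist_iff C (hbot C h2)).1 h3)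
  choose φ hφ using hup
  refine ⟨Nat.card_le_card_of_injective φ
    fun C C' h => Subtype.ext (by rw [← hφ, ← hφ, h]), ?_⟩
  have hlow : Nat.card {f : (Fin a → V) →ₗ[A] (Fin b → V) // ¬ Bad γ f} ≤ c := by
    refine Nat.card_le_card_of_injective (fun f => ⟨graphCode f.1, ?_⟩) ?_
    · have hF : Module.Free A (graphCode f.1) := Module.Free.of_equiv (graphEquiv f.1).symm
      have hc : Nat.card (graphCode f.1) = Nat.card V ^ a := by
        simpa [Nat.card_fun] using Nat.card_congr (graphEquiv f.1).toEquiv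
      exact ⟨hF, (hfree _).2 hc,
        (le_minDist_iff _ (hbot _ hc)).2 (lt_wt_of_not_bad hγs f.2)⟩
    · exact fun f g h => Subtype.ext (graphCode_injective (congrArg Subtype.val h))
  have hsum : H = Nat.card {f : (Fin a → V) →ₗ[A] (Fin b → V) // Bad γ f} +
      Nat.card {f : (Fin a → V) →ₗ[A] (Fin b → V) // ¬ Bad γ f} := by
    rw [← Nat.card_sum]
    exact Nat.card_congr (Equiv.sumCompl _).symm
  have hbad := card_bad_mul_le (a := a) (b := b) (V := V) hs hγs hγ hloc
  calc H * (Nat.card (A ⧸ Ideal.span {γ}) - 1)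
      = _ + _ := by rw [hsum, add_mul]
    _ ≤ 2 ^ (a + b) * H + c * (Nat.card (A ⧸ Ideal.span {γ}) - 1) :=
        Nat.add_le_add hbad (Nat.mul_le_mul_right _ hlow)
    _ = _ := add_comm _ _

theorem natCard_linearMap [Finite A] [Finite V] [Module.Free A V] [Nontrivial A]
    {k : ℕ} (hk : Nat.card A ^ k = Nat.card V ^ a) :
    Nat.card ((Fin a → V) →ₗ[A] (Fin b → V)) = (Nat.card V ^ b) ^ k := by
  have hA : 1 < Nat.card A := Finite.one_lt_card
  have : Module.finrank A (Fin a → V) = k := by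
    apply Nat.pow_right_injective hA
    change _ ^ _ = _ ^ _
    rw [hk, ← card_eq_pow_finrank_of_free, Nat.card_fun, Nat.card_fin]
  rw [← Nat.card_congr ((Module.finBasis A (Fin a → V)).constr (M' := Fin b → V) ℕ).toEquiv, this]
  simp [Nat.card_fun]

end Counting

/-! ### Cardinalities and freeness -/

/-- A chain ring of length `s` with residue field of `q` elements has `q ^ s` elements: for `i < s`
the quotient of `(γ ^ i)` by `(γ ^ (i + 1))` is isomorphic to the residue field. -/
theorem card_chain {s q : ℕ} {R : Type*} [CommRing R] [Finite R] {γ : R} (hs : 1 ≤ s)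
    (h : IsChainData s q R γ) : Nat.card R = q ^ s := by
  obtain ⟨hmax, hloc, hγs, hγ, hq⟩ := h
  have key : ∀ i, i < s → Nat.card (Ideal.span {γ ^ i}) =
      Nat.card (Ideal.span {γ ^ (i + 1)}) * q := by
    intro i hi
    have hle : Ideal.span {γ ^ (i + 1)} ≤ Ideal.span {γ ^ i} := by
      rw [Ideal.span_singleton_le_span_singleton, pow_succ]
      exact dvd_mul_right _ _
    let P := Ideal.span {γ ^ i}
    let f : R →ₗ[R] P ⧸ (Submodule.comap P.subtype (Ideal.span {γ ^ (i + 1)})) :=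
      (Submodule.mkQ _) ∘ₗ
        (LinearMap.toSpanSingleton R P ⟨γ ^ i, Ideal.mem_span_singleton_self _⟩)
    have hf : Function.Surjective f := by
      rintro ⟨⟨x, hx⟩⟩
      obtain ⟨r, rfl⟩ := Ideal.mem_span_singleton'.1 hx
      exact ⟨r, rfl⟩
    have hmem : ∀ r, r ∈ LinearMap.ker f ↔ r * γ ^ i ∈ Ideal.span {γ ^ (i + 1)} := by
      intro r
      rw [LinearMap.mem_ker]
      exact Submodule.Quotient.mk_eq_zero _
    have hker : LinearMap.ker f = Ideal.span {γ} := by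
      ext r
      rw [hmem]
      constructor
      · intro hr
        refine hloc r fun hu => hγ ?_
        obtain ⟨t, ht⟩ := Ideal.mem_span_singleton'.1 hr
        have hun : IsUnit (r - t * γ) := by
          by_contra hn
          have h1 := hloc _ hn
          have h2 : r ∈ Ideal.span {γ} := by
            have := Ideal.add_mem _ h1 (Ideal.mul_mem_left _ t (Ideal.mem_span_singleton_self γ))
            simpa using this
          exact hmax.ne_top (Ideal.eq_top_of_isUnit_mem _ h2 hu)
        have h3 : (r - t * γ) * γ ^ i = 0 := by
          rw [sub_mul, ← ht]; ring
        exact pow_eq_zero_of_le (by omega) (hun.mul_right_eq_zero.1 h3)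
      · intro hr
        obtain ⟨t, rfl⟩ := Ideal.mem_span_singleton'.1 hr
        exact Ideal.mem_span_singleton'.2 ⟨t, by ring⟩
    have e : (R ⧸ Ideal.span {γ}) ≃ₗ[R]
        P ⧸ (Submodule.comap P.subtype (Ideal.span {γ ^ (i + 1)})) :=
      (Submodule.quotEquivOfEq _ _ hker.symm).trans (f.quotKerEquivOfSurjective hf)
    have h1 := Submodule.card_eq_card_quotient_mul_card
      (Submodule.comap P.subtype (Ideal.span {γ ^ (i + 1)}))
    rw [← Nat.card_congr e.toEquiv, hq,
      Nat.card_congr (Submodule.comapSubtypeEquivOfLe hle).toEquiv] at h1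
    exact h1
  have hall : ∀ i, i ≤ s → Nat.card R = Nat.card (Ideal.span {γ ^ i}) * q ^ i := by
    intro i
    induction i with
    | zero =>
      intro _
      simp only [pow_zero, mul_one, Ideal.span_singleton_one]
      exact (Nat.card_congr (Equiv.Set.univ R)).symm
    | succ i ih =>
      intro hi
      rw [ih (by omega), key i (by omega)]
      ring
  have := hall s le_rfl
  rw [hγs] at this
  simpa using this

/-- A finite algebra `S` over a local ring `A` is free as soon as its cardinality is the one
predicted by the dimension of its reduction modulo the maximal ideal: lifting a basis of the
reduction gives a surjection from a free module with the same number of elements. -/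
theorem free_of_card {A S : Type*} [CommRing A] [CommRing S] [Algebra A S] [Finite A] [Finite S]
    {γ : A} {ℓ m q c : ℕ} (hq : 2 ≤ q)
    (hmax : (Ideal.span {γ}).IsMaximal)
    (hloc : ∀ x : A, ¬IsUnit x → x ∈ Ideal.span {γ})
    (hA : Nat.card (A ⧸ Ideal.span {γ}) = q ^ ℓ)
    (hS : Nat.card (S ⧸ Ideal.span {algebraMap A S γ}) = q ^ m)
    (hcA : Nat.card A = c ^ ℓ) (hcS : Nat.card S = c ^ m) : Module.Free A S := by
  have hlocal : IsLocalRing A := by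
    have : Nontrivial A := ⟨0, 1, fun h => hmax.ne_top
      ((Ideal.eq_top_iff_one _).2 (h ▸ Ideal.zero_mem _))⟩
    refine IsLocalRing.of_nonunits_add fun x y hx hy hu => ?_
    exact hmax.ne_top (Ideal.eq_top_of_isUnit_mem _ (Ideal.add_mem _ (hloc x hx) (hloc y hy)) hu)
  have hp : Ideal.span {γ} = IsLocalRing.maximalIdeal A := IsLocalRing.eq_maximalIdeal hmax
  have hpS : Ideal.span {algebraMap A S γ} =
      Ideal.map (algebraMap A S) (IsLocalRing.maximalIdeal A) := by
    rw [← hp, Ideal.map_span, Set.image_singleton]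
  rw [hp] at hA
  rw [hpS] at hS
  let p := IsLocalRing.maximalIdeal A
  let pS := Ideal.map (algebraMap A S) p
  have : Module.Finite (A ⧸ p) (S ⧸ pS) := Module.Finite.of_restrictScalars_finite A _ _
  let : Field (A ⧸ p) := Ideal.Quotient.field p
  let b := Module.finBasis (A ⧸ p) (S ⧸ pS)
  have hcard : (q ^ ℓ) ^ Module.finrank (A ⧸ p) (S ⧸ pS) = q ^ m := by
    rw [← hA, ← hS]; exact (card_eq_pow_finrank_of_free).symm
  rw [← pow_mul] at hcard
  have hr := Nat.pow_right_injective hq hcard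
  choose v hv using fun i => Ideal.Quotient.mk_surjective (I := pS) (b i)
  have hspan : Submodule.span A (Set.range v) = ⊤ := by
    rw [← IsLocalRing.quotient_span_eq_top_iff_span_eq_top, ← Set.range_comp]
    rw [← b.span_eq]
    congr 2
    exact funext hv
  have hsurj : Function.Surjective (Fintype.linearCombination A v) := by
    rw [← LinearMap.range_eq_top, Fintype.range_linearCombination, hspan]
  have hbij := (Nat.bijective_iff_surjective_and_card (Fintype.linearCombination A v)).2
    ⟨hsurj, by rw [Nat.card_fun, Nat.card_fin, hcA, hcS, ← pow_mul, hr]⟩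
  exact Module.Free.of_equiv (LinearEquiv.ofBijective _ hbij)

/-! ### Asymptotics -/

theorem prod_zpow_eq (x : ℝ) (hx : x ≠ 0) (K : ℤ) (k : ℕ) :
    ∏ i ∈ Finset.Icc 1 k, x ^ (K - 2 * (i : ℤ) + 1) = x ^ ((k : ℤ) * (K - k)) := by
  induction k with
  | zero => simp
  | succ k ih =>
    rw [Finset.prod_Icc_succ_top (by omega), ih, ← zpow_add₀ hx]
    congr 1
    push_cast
    ring

/-- Each factor of the Gaussian-type product contributes its leading term `Q ^ (K - 2 * i + 1)`, where
`K = k + j`; these leading terms multiply to `Q ^ (k * j)`. -/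
theorem NN_eq {s k j Q : ℕ} (hQ : 2 ≤ Q) :
    NN s Q ((k + j : ℕ) : ℤ) (k : ℤ) = (Q : ℝ) ^ (s * k * j) *
      ∏ i ∈ Finset.Icc 1 k, (1 - (Q : ℝ) ^ (-(((k + j : ℕ) : ℤ) - (i : ℤ) + 1))) /
        (1 - (Q : ℝ) ^ (-(i : ℤ))) := by
  have hx : (Q : ℝ) ≠ 0 := by positivity
  have hx1 : (1 : ℝ) < Q := by exact_mod_cast hQ
  unfold NN
  rw [if_neg (by omega), Int.toNat_natCast]
  have hfac : ∀ i ∈ Finset.Icc 1 k,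
      ((Q : ℝ) ^ (((k + j : ℕ) : ℤ) - (i : ℤ) + 1) - 1) / ((Q : ℝ) ^ (i : ℤ) - 1) =
      (Q : ℝ) ^ (((k + j : ℕ) : ℤ) - 2 * (i : ℤ) + 1) *
        ((1 - (Q : ℝ) ^ (-(((k + j : ℕ) : ℤ) - (i : ℤ) + 1))) / (1 - (Q : ℝ) ^ (-(i : ℤ)))) := by
    intro i hi
    have hi1 : 1 ≤ i := (Finset.mem_Icc.1 hi).1
    have h1 : (Q : ℝ) ^ (i : ℤ) - 1 ≠ 0 := by
      rw [zpow_natCast]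
      exact (sub_pos.2 (one_lt_pow₀ hx1 (by omega))).ne'
    have h2 : (Q : ℝ) ^ (((k + j : ℕ) : ℤ) - 2 * (i : ℤ) + 1) =
        (Q : ℝ) ^ (((k + j : ℕ) : ℤ) - (i : ℤ) + 1) * ((Q : ℝ) ^ (i : ℤ))⁻¹ := by
      rw [← zpow_neg, ← zpow_add₀ hx]; congr 1; ring
    have h3 : (Q : ℝ) ^ (i : ℤ) ≠ 0 := zpow_ne_zero _ hx
    have h4 : (Q : ℝ) ^ (((k + j : ℕ) : ℤ) - (i : ℤ) + 1) ≠ 0 := zpow_ne_zero _ hx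
    rw [h2, zpow_neg, zpow_neg]
    generalize (Q : ℝ) ^ (i : ℤ) = u at *
    generalize (Q : ℝ) ^ (((k + j : ℕ) : ℤ) - (i : ℤ) + 1) = v at *
    have h5 : 1 - u⁻¹ ≠ 0 := by
      intro h
      apply h1
      field_simp at h
      linarith
    field_simp
  rw [Finset.prod_congr rfl hfac, Finset.prod_mul_distrib, prod_zpow_eq _ hx, ← mul_assoc,
    ← zpow_add₀ hx, ← zpow_natCast]
  congr 2
  push_cast
  ring

/-- The denominator of the density, which counts all free codes of rank `k` in a free module of rank
`k + j`, is asymptotic to the number `Q ^ (s * k * j)` of systematic ones. -/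
theorem tendsto_NN_div {s k j : ℕ} :
    Tendsto (fun Q : ℕ => NN s Q ((k + j : ℕ) : ℤ) (k : ℤ) / (Q : ℝ) ^ (s * k * j)) atTop
      (𝓝 1) := by
  have hz : ∀ e : ℤ, 0 < e → Tendsto (fun Q : ℕ => 1 - (Q : ℝ) ^ (-e)) atTop (𝓝 1) := by
    intro e he
    have := (tendsto_zpow_atTop_zero (𝕜 := ℝ) (n := -e) (by omega)).comp
      (tendsto_natCast_atTop_atTop (R := ℝ))
    simpa using this.const_sub 1
  have hE : Tendsto (fun Q : ℕ => ∏ i ∈ Finset.Icc 1 k,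
      (1 - (Q : ℝ) ^ (-(((k + j : ℕ) : ℤ) - (i : ℤ) + 1))) / (1 - (Q : ℝ) ^ (-(i : ℤ)))) atTop
      (𝓝 1) := by
    have h0 : ∏ i ∈ Finset.Icc 1 k, ((1 : ℝ) / 1) = 1 := by simp
    refine Eq.mp (congrArg (fun r => Tendsto _ atTop (𝓝 r)) h0) (tendsto_finsetProd _ fun i hi => ?_)
    obtain ⟨h1, h2⟩ := Finset.mem_Icc.1 hi
    exact (hz _ (by push_cast; omega)).div (hz _ (by omega)) one_ne_zero
  refine hE.congr' ?_
  filter_upwards [eventually_ge_atTop 2] with Q hQ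
  rw [NN_eq hQ, mul_div_cancel_left₀]
  positivity

/-- `H` is the number of redundancy maps; at most the fraction `2 ^ n / (q ^ ℓ - 1)` of them is bad. -/
theorem numCodes_bounds {s q ℓ m t a b : ℕ} {R S : Type} [CommRing R] [CommRing S] [Finite R]
    [Finite S] [Algebra R S] {γ : R} {Sbar : Subalgebra R S} (hs : 1 ≤ s) (hl : 1 ≤ ℓ)
    (hm : 1 ≤ m) (hq : 2 ≤ q) (hmt : m = ℓ * t) (ha : 1 ≤ a)
    (hR : IsChainData s q R γ) (hS : IsGaloisExtData m (q ^ m) R S γ)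
    (hSb : IsGaloisExtData ℓ (q ^ ℓ) R Sbar γ) :
    let c := numCodes Sbar (n := a + b) hammingD (t * a) (b + 1)
    let H := (q ^ ℓ) ^ (s * (t * a) * (t * b))
    c ≤ H ∧ H * (q ^ ℓ - 1) ≤ c * (q ^ ℓ - 1) + 2 ^ (a + b) * H := by
  have hcR := card_chain hs hR
  obtain ⟨hSfree, hSrank, -, -, hScard⟩ := hS
  obtain ⟨hAfree, hArank, hAmax, hAloc, hAcard⟩ := hSb
  have hcR1 : 1 < Nat.card R := hcR ▸ Nat.one_lt_pow (by omega) (by omega)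
  have : Nontrivial R := Finite.one_lt_card_iff_nontrivial.1 hcR1
  have hcS : Nat.card S = Nat.card R ^ m := by
    rw [card_eq_pow_finrank_of_free (A := R), hSrank]
  have hcA : Nat.card Sbar = Nat.card R ^ ℓ := by
    rw [card_eq_pow_finrank_of_free (A := R), hArank]
  have : Nontrivial S := Finite.one_lt_card_iff_nontrivial.1
    (hcS ▸ Nat.one_lt_pow (by omega) hcR1)
  have : Nontrivial Sbar := Finite.one_lt_card_iff_nontrivial.1
    (hcA ▸ Nat.one_lt_pow (by omega) hcR1)
  have hinj : Function.Injective (algebraMap R Sbar) := FaithfulSMul.algebraMap_injective _ _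
  have hγs : (algebraMap R Sbar γ) ^ s = 0 := by rw [← map_pow, hR.2.2.1, map_zero]
  have hγ : (algebraMap R Sbar γ) ^ (s - 1) ≠ 0 := by
    rw [← map_pow]
    exact (map_ne_zero_iff _ hinj).2 hR.2.2.2.1
  have hfree : Module.Free Sbar S :=
    free_of_card (γ := algebraMap R Sbar γ) hq hAmax hAloc hAcard hScard hcA hcS
  have hk : Nat.card Sbar ^ (t * a) = Nat.card S ^ a := by
    rw [hcA, hcS, hmt, ← pow_mul, ← pow_mul, mul_assoc]
  have hH := natCard_linearMap (A := Sbar) (V := S) (a := a) (b := b) hk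
  have hH' : Nat.card ((Fin a → S) →ₗ[Sbar] (Fin b → S)) =
      (q ^ ℓ) ^ (s * (t * a) * (t * b)) := by
    rw [hH, hcS, hcR, hmt]
    simp only [← pow_mul]
    congr 1
    ring
  have := card_codes_bounds (A := Sbar) (V := S) (b := b) hs ha hγs hγ hAloc hk
  rw [hH', hAcard] at this
  exact this

theorem stmt15 (s m ℓ n d : ℕ) (hs : 1 ≤ s) (hm : 1 ≤ m) (hl : 1 ≤ ℓ) (hn : 2 ≤ n)
    (hlm : ℓ ∣ m) (hd : 2 ≤ d) (hdn : d ≤ n) (hdiv : ℓ ∣ m * (n - d + 1))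
    (R S : ℕ → Type) [∀ q, CommRing (R q)] [∀ q, Fintype (R q)]
    [∀ q, CommRing (S q)] [∀ q, Fintype (S q)] [∀ q, Algebra (R q) (S q)]
    (γ : ∀ q, R q) (Sbar : ∀ q, Subalgebra (R q) (S q))
    (hfam : ∀ q, IsPrimePow q →
      IsChainData s q (R q) (γ q) ∧ IsGaloisExtData m (q ^ m) (R q) (S q) (γ q) ∧
        IsGaloisExtData ℓ (q ^ ℓ) (R q) (↥(Sbar q)) (γ q))
    :
    Tendsto (fun q : ℕ => densityCodes (n := n) s q ℓ (Sbar q) hammingD (n * m) (m * (n - d + 1) / ℓ) d) (atTop ⊓ 𝓟 {q : ℕ | IsPrimePow q}) (𝓝 1) := by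
  obtain ⟨b, rfl⟩ : ∃ b, d = b + 1 := ⟨d - 1, by omega⟩
  obtain ⟨a, rfl⟩ : ∃ a, n = a + b := ⟨n - b, by omega⟩
  obtain ⟨t, rfl⟩ := hlm
  have ha : 1 ≤ a := by omega
  have hn' : a + b - (b + 1) + 1 = a := by omega
  have hk : ℓ * t * a / ℓ = t * a := by
    rw [mul_assoc, Nat.mul_div_cancel_left _ (by omega)]
  have hK : (a + b) * (ℓ * t) / ℓ = t * a + t * b := by
    rw [show (a + b) * (ℓ * t) = ℓ * (t * a + t * b) by ring, Nat.mul_div_cancel_left _ (by omega)]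
  rw [hn', hk]
  unfold densityCodes
  rw [hK]
  set l : Filter ℕ := atTop ⊓ 𝓟 {q : ℕ | IsPrimePow q} with hldef
  have hQ : Tendsto (fun q : ℕ => q ^ ℓ) l atTop :=
    (tendsto_pow_atTop (by omega)).mono_left inf_le_left
  have hNN := (tendsto_NN_div (s := s) (k := t * a) (j := t * b)).comp hQ
  have hpp : ∀ᶠ q in l, IsPrimePow q := mem_inf_of_right (mem_principal_self _)
  have hc : Tendsto (fun q : ℕ =>
      (numCodes (Sbar q) (n := a + b) hammingD (t * a) (b + 1) : ℝ) /
        ((q ^ ℓ : ℕ) : ℝ) ^ (s * (t * a) * (t * b))) l (𝓝 1) := by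
    have hlow : Tendsto (fun q : ℕ => 1 - 2 ^ (a + b) / (((q ^ ℓ : ℕ) : ℝ) - 1)) l (𝓝 1) := by
      have h1 : Tendsto (fun q : ℕ => ((q ^ ℓ : ℕ) : ℝ) - 1) l atTop :=
        tendsto_atTop_add_const_right _ _ (tendsto_natCast_atTop_atTop.comp hQ)
      simpa using (h1.const_div_atTop (2 ^ (a + b))).const_sub 1
    refine tendsto_of_tendsto_of_tendsto_of_le_of_le' hlow tendsto_const_nhds ?_ ?_
    all_goals
      filter_upwards [hpp] with q hq
      obtain ⟨hR, hS, hSb⟩ := hfam q hq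
      obtain ⟨h1, h2⟩ := numCodes_bounds (b := b) hs hl hm hq.two_le rfl ha hR hS hSb
      have hq2 : 1 < q ^ ℓ := Nat.one_lt_pow (by omega) hq.two_le
      generalize numCodes (Sbar q) (n := a + b) hammingD (t * a) (b + 1) = c at *
      have hH : (0 : ℝ) < ((q ^ ℓ : ℕ) : ℝ) ^ (s * (t * a) * (t * b)) := by positivity
    · have h3 : (0 : ℝ) < ((q ^ ℓ : ℕ) : ℝ) - 1 := sub_pos.2 (by exact_mod_cast hq2)
      have h4 : (((q ^ ℓ - 1 : ℕ) : ℕ) : ℝ) = ((q ^ ℓ : ℕ) : ℝ) - 1 := by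
        rw [Nat.cast_sub hq2.le, Nat.cast_one]
      have h5 := (Nat.cast_le (α := ℝ)).2 h2
      rw [Nat.cast_add, Nat.cast_mul, Nat.cast_mul, Nat.cast_mul, h4, Nat.cast_pow,
        Nat.cast_pow 2, Nat.cast_ofNat] at h5
      rw [le_div_iff₀ hH, sub_mul, one_mul, sub_le_iff_le_add, div_mul_eq_mul_div]
      rw [← sub_le_iff_le_add', le_div_iff₀ h3, sub_mul]
      linarith
    · rw [div_le_one hH]
      exact_mod_cast h1
  have hdiv' := hc.div hNN one_ne_zero
  rw [div_one] at hdiv'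
  refine hdiv'.congr' ?_
  filter_upwards [hpp] with q hq
  have hH : ((q ^ ℓ : ℕ) : ℝ) ^ (s * (t * a) * (t * b)) ≠ 0 := by
    have := hq.pos
    positivity
  simp only [Function.comp_apply, Pi.div_apply]
  rw [div_div_div_cancel_right₀ hH]
end

section
/- Let d ≥ 2 be an integer and q a prime power. Then, taking the limit over integers n ≥ d with ℓ ∣ m(n−d+1) and setting k(n) := m(n−d+1)/ℓ and N = nm, one has lim_{n→∞} δ_q^{H}(N, k(n), ℓ, d) = 0; i.e., MDR codes in the Hamming metric are sparse as the length n → ∞. -/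
/-!
Fix `n`, put `K = n - d + 1` and `t = m / ℓ`. A free code `C` of rank `t * K` has at least
`|S| ^ K` elements. If its minimum distance is at least `d`, a nonzero codeword cannot vanish on the
first `K` coordinates, so projection to them is a bijection `C → S ^ K`: the code is the graph of an
`S̄`-linear map `S ^ K → S ^ (d - 1)`, that is, of a `K × (d - 1)` matrix of `S̄`-linear
endomorphisms of `S`. Every entry of this matrix is injective: if the entry `(i, j)` killed some
`a ≠ 0`, the codeword with information part `a` at `i` would have weight at most
`1 + (d - 2) < d` (`exists_graph`).

By Nakayama, `S` is generated by `t` elements over `S̄` (`exists_span`), so there are at most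
`Q = q ^ (m s t)` endomorphisms, and at most `Q - 1` injective ones because the zero map is not
injective (`card_injective_le`). Hence there are at most `(Q - 1) ^ (K (d - 1))` codes
(`numCodes_le`), whereas the denominator of the density is at least `Q ^ (K (d - 1))` (`NN_lower`).
The density is therefore at most `(1 - 1 / Q) ^ (K (d - 1))`, which tends to `0`.
-/

open Filter Topology

/-- After reversing the order of the numerators, each factor of the Gaussian binomial is
`(b ^ (n - k + i) - 1) / (b ^ i - 1) ≥ b ^ (n - k)`. -/
lemma NN_lower (s b n k : ℕ) (hs : 1 ≤ s) (hb : 2 ≤ b) (hk : k ≤ n) :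
    (b : ℝ) ^ (k * (n - k) * s) ≤ NN s b (n : ℤ) (k : ℤ) := by
  obtain ⟨t, rfl⟩ := Nat.exists_eq_add_of_le hk
  obtain ⟨s, rfl⟩ := Nat.exists_eq_add_of_le hs
  have hb1 : (1 : ℝ) < b := by exact_mod_cast hb
  have hb0 : (0 : ℝ) < b := by linarith
  have hden : ∀ i ∈ Finset.Icc 1 k, (0 : ℝ) < (b : ℝ) ^ i - 1 := fun i hi => by
    have := one_lt_pow₀ hb1 (n := i) (by have := (Finset.mem_Icc.1 hi).1; omega)
    linarith
  -- the substitution `i ↦ k + 1 - i` in the numerators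
  have hnum : ∏ i ∈ Finset.Icc 1 k, ((b : ℝ) ^ (((k + t : ℕ) : ℤ) - (i : ℤ) + 1) - 1)
      = ∏ i ∈ Finset.Icc 1 k, ((b : ℝ) ^ (t + i) - 1) := by
    refine Finset.prod_bij' (fun i _ => k + 1 - i) (fun i _ => k + 1 - i) ?_ ?_ ?_ ?_ ?_
    · intro i hi; simp only [Finset.mem_Icc] at hi ⊢; omega
    · intro i hi; simp only [Finset.mem_Icc] at hi ⊢; omega
    · intro i hi; simp only [Finset.mem_Icc] at hi ⊢; omega
    · intro i hi; simp only [Finset.mem_Icc] at hi ⊢; omega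
    · intro i hi
      simp only [Finset.mem_Icc] at hi
      rw [← zpow_natCast]
      congr 2
      omega
  unfold NN
  rw [if_neg (by omega), Int.toNat_natCast, Finset.prod_div_distrib, hnum,
    ← Finset.prod_div_distrib]
  have hprod : ((b : ℝ) ^ t) ^ k ≤
      ∏ i ∈ Finset.Icc 1 k, ((b : ℝ) ^ (t + i) - 1) / ((b : ℝ) ^ (i : ℤ) - 1) := by
    calc ((b : ℝ) ^ t) ^ k = ∏ i ∈ Finset.Icc 1 k, (b : ℝ) ^ t := by simp
      _ ≤ _ := by
        refine Finset.prod_le_prod (fun i _ => by positivity) fun i hi => ?_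
        rw [zpow_natCast, le_div_iff₀ (hden i hi), pow_add]
        have := one_le_pow₀ hb1.le (n := t)
        nlinarith
  have hexp : (b : ℝ) ^ ((k : ℤ) * (((k + t : ℕ) : ℤ) - k) * (((1 + s : ℕ) : ℤ) - 1))
      = (b : ℝ) ^ (k * t * s) := by
    rw [← zpow_natCast]
    congr 1
    push_cast
    ring
  rw [hexp, Nat.add_sub_cancel_left]
  calc (b : ℝ) ^ (k * t * (1 + s)) = (b : ℝ) ^ (k * t * s) * ((b : ℝ) ^ t) ^ k := by
        rw [← pow_mul, ← pow_add]; ring_nf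
    _ ≤ _ := by gcongr

/-- Every element has a `γ`-adic expansion of length `s` with digits in a fixed set of
representatives of `R / γ`. -/
lemma card_le_of_chain {s q : ℕ} {R : Type*} [CommRing R] [Finite R] {γ : R}
    (h0 : γ ^ s = 0) (hq : Nat.card (R ⧸ Ideal.span {γ}) = q) : Nat.card R ≤ q ^ s := by
  obtain ⟨c, hc⟩ := (Ideal.Quotient.mk_surjective (I := Ideal.span {γ})).hasRightInverse
  have key : ∀ j : ℕ, ∀ x : R, ∃ a : Fin j → R ⧸ Ideal.span {γ}, ∃ y : R,
      x = ∑ i : Fin j, c (a i) * γ ^ (i : ℕ) + γ ^ j * y := by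
    intro j
    induction j with
    | zero => intro x; exact ⟨Fin.elim0, x, by simp⟩
    | succ j ih =>
      intro x
      obtain ⟨a, y, hx⟩ := ih x
      have : y - c (Ideal.Quotient.mk _ y) ∈ Ideal.span {γ} := by
        rw [← Ideal.Quotient.mk_eq_mk_iff_sub_mem, hc]
      obtain ⟨z, hz⟩ := Ideal.mem_span_singleton'.1 this
      refine ⟨Fin.snoc a (Ideal.Quotient.mk _ y), z, ?_⟩
      rw [Fin.sum_univ_castSucc]
      simp only [Fin.snoc_castSucc, Fin.snoc_last, Fin.val_castSucc, Fin.val_last]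
      rw [hx]
      linear_combination (-γ ^ j) * hz
  have hsurj : Function.Surjective
      (fun a : Fin s → R ⧸ Ideal.span {γ} => ∑ i : Fin s, c (a i) * γ ^ (i : ℕ)) := by
    intro x
    obtain ⟨a, y, hx⟩ := key s x
    exact ⟨a, by simp [hx, h0]⟩
  have : Finite (R ⧸ Ideal.span {γ}) :=
    Finite.of_surjective _ Ideal.Quotient.mk_surjective
  calc Nat.card R ≤ Nat.card (Fin s → R ⧸ Ideal.span {γ}) := Nat.card_le_card_of_surjective _ hsurj
    _ = q ^ s := by rw [Nat.card_fun, hq, Nat.card_fin]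

/-- Nakayama's lemma for the nilpotent ideal `(g)`: lifts of a basis of `S / gS` over the residue
field of `A` generate `S`. The dimension `t` of `S / gS` is read off from its cardinality. -/
lemma exists_span {A S : Type*} [CommRing A] [CommRing S] [Finite A] [Finite S] [Algebra A S]
    {g : A} {s Q t : ℕ} (hg : g ^ s = 0) (hmax : (Ideal.span {g}).IsMaximal) (hQ1 : 2 ≤ Q)
    (hA : Nat.card (A ⧸ Ideal.span {g}) = Q)
    (hS : Nat.card (S ⧸ Ideal.span {algebraMap A S g}) = Q ^ t) :
    ∃ b : Fin t → S, Submodule.span A (Set.range b) = ⊤ := by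
  classical
  let := Ideal.Quotient.field (Ideal.span {g})
  have hle : Ideal.span {g} ≤ (Ideal.span {algebraMap A S g}).comap (algebraMap A S) := by
    rw [Ideal.span_singleton_le_iff_mem, Ideal.mem_comap]
    exact Ideal.mem_span_singleton_self _
  let : Algebra (A ⧸ Ideal.span {g}) (S ⧸ Ideal.span {algebraMap A S g}) :=
    Ideal.Quotient.algebraQuotientOfLEComap hle
  have : Finite (S ⧸ Ideal.span {algebraMap A S g}) :=
    Finite.of_surjective _ Ideal.Quotient.mk_surjective
  have hfr : Module.finrank (A ⧸ Ideal.span {g}) (S ⧸ Ideal.span {algebraMap A S g}) = t := by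
    have h := Module.natCard_eq_pow_finrank (K := A ⧸ Ideal.span {g})
      (V := S ⧸ Ideal.span {algebraMap A S g})
    rw [hA, hS] at h
    exact (Nat.pow_right_injective hQ1 h).symm
  let e := Module.finBasisOfFinrankEq _ _ hfr
  choose b hb using fun i => Ideal.Quotient.mk_surjective (e i)
  choose lift hlift using Ideal.Quotient.mk_surjective (I := Ideal.span {g})
  have step : ∀ x : S, ∃ y ∈ Submodule.span A (Set.range b), ∃ z, x = y + algebraMap A S g * z := by
    intro x
    let co := fun i => lift (e.repr (Ideal.Quotient.mk _ x) i)
    refine ⟨∑ i, co i • b i, Submodule.sum_mem _ fun i _ => Submodule.smul_mem _ _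
      (Submodule.subset_span ⟨i, rfl⟩), ?_⟩
    have hx : x - ∑ i, co i • b i ∈ Ideal.span {algebraMap A S g} := by
      rw [← Ideal.Quotient.mk_eq_mk_iff_sub_mem]
      conv_lhs => rw [← e.sum_repr (Ideal.Quotient.mk _ x)]
      rw [map_sum]
      refine Finset.sum_congr rfl fun i _ => ?_
      rw [Algebra.smul_def, Algebra.smul_def, map_mul, hb, ← hlift (e.repr _ i)]
      rfl
    obtain ⟨z, hz⟩ := Ideal.mem_span_singleton'.1 hx
    exact ⟨z, by rw [mul_comm, hz]; ring⟩
  have key : ∀ j : ℕ, ∀ x : S, ∃ y ∈ Submodule.span A (Set.range b), ∃ z,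
      x = y + algebraMap A S g ^ j * z := by
    intro j
    induction j with
    | zero => exact fun x => ⟨0, Submodule.zero_mem _, x, by simp⟩
    | succ j ih =>
      intro x
      obtain ⟨y, hy, z, rfl⟩ := ih x
      obtain ⟨y', hy', z', rfl⟩ := step z
      refine ⟨y + g ^ j • y', Submodule.add_mem _ hy (Submodule.smul_mem _ _ hy'), z', ?_⟩
      rw [Algebra.smul_def, map_pow]
      ring
  refine ⟨b, (Submodule.eq_top_iff').2 fun x => ?_⟩
  obtain ⟨y, hy, z, rfl⟩ := key s x
  rwa [← map_pow, hg, map_zero, zero_mul, add_zero]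

lemma card_injective_le {A S : Type*} [CommRing A] [CommRing S] [Finite S] [Nontrivial S]
    [Algebra A S] {t : ℕ} (b : Fin t → S) (hb : Submodule.span A (Set.range b) = ⊤) :
    Nat.card {f : S →ₗ[A] S // Function.Injective f} ≤ Nat.card S ^ t - 1 := by
  have hinj : Function.Injective (fun f : {f : S →ₗ[A] S // Function.Injective f} =>
      (⟨fun i => f.1 (b i), fun h => by
        -- an injective map vanishing on a spanning family would force `1 = 0`
        have h0 : f.1 = 0 := LinearMap.ext_on_range hb fun i => congrFun h i
        exact one_ne_zero (f.2 (by simp [h0] : f.1 1 = f.1 0))⟩ :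
        {v : Fin t → S // v ≠ 0})) := by
    intro f f' h
    exact Subtype.ext (LinearMap.ext_on_range hb fun i => congrFun (congrArg Subtype.val h) i)
  refine (Nat.card_le_card_of_injective _ hinj).trans ?_
  have : Fintype S := Fintype.ofFinite S
  classical
  rw [Nat.card_eq_fintype_card, Fintype.card_subtype_compl]
  simp [Nat.card_eq_fintype_card]

/-- A code `C` with at least `|S| ^ |P|` elements, all of whose nonzero words have weight greater
than `|Pᶜ|`, is the graph of a linear map `S ^ P → S ^ Pᶜ` whose matrix entries are injective. -/
lemma exists_graph {A S : Type*} [CommRing A] [CommRing S] [Finite S] [Algebra A S]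
    {ι : Type*} [Fintype ι] (P : ι → Prop) (C : Submodule A (ι → S))
    (hC : Nat.card S ^ Nat.card {i // P i} ≤ Nat.card C)
    (hd : ∀ x ∈ C, x ≠ 0 → Nat.card {i // ¬ P i} < Nat.card {i // x i ≠ 0}) :
    ∃ F : {i // P i} × {i // ¬ P i} → {f : S →ₗ[A] S // Function.Injective f},
      ∀ x, x ∈ C ↔ ∀ j : {i // ¬ P i}, x j = ∑ᶠ i : {i // P i}, (F (i, j)).1 (x i) := by
  classical
  let p : C →ₗ[A] ({i // P i} → S) := (LinearMap.funLeft A S Subtype.val).comp C.subtype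
  have hp : ∀ (x : C) i, p x i = x.1 i := fun _ _ => rfl
  have hpinj : Function.Injective p := by
    rw [← LinearMap.ker_eq_bot, LinearMap.ker_eq_bot']
    intro x hx
    by_contra hne
    have h1 := hd x x.2 (fun h => hne (Subtype.ext h))
    refine absurd h1 (not_lt.2 ?_)
    refine Nat.card_le_card_of_injective (fun i : {i // x.1 i ≠ 0} =>
      (⟨i.1, fun hP => i.2 (congrFun hx ⟨i.1, hP⟩)⟩ : {i // ¬ P i})) ?_
    intro i j h
    exact Subtype.ext (Subtype.mk.inj h)
  have hpbij : Function.Bijective p := by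
    refine hpinj.bijective_of_nat_card_le ?_
    rw [Nat.card_fun]; exact hC
  let e := LinearEquiv.ofBijective p hpbij
  have he : ∀ (v : {i // P i} → S) i, (e.symm v).1 i.1 = v i := fun v i =>
    congrFun (e.apply_symm_apply v) i
  let f : {i // P i} × {i // ¬ P i} → S →ₗ[A] S := fun ij =>
    (LinearMap.proj ij.2.1).comp (C.subtype.comp
      (e.symm.toLinearMap.comp (LinearMap.single A (fun _ => S) ij.1)))
  have hf : ∀ i j a, f (i, j) a = (e.symm (Pi.single i a)).1 j.1 := fun _ _ _ => rfl
  have hfinj : ∀ ij, Function.Injective (f ij) := by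
    rintro ⟨i, j⟩
    rw [← LinearMap.ker_eq_bot, LinearMap.ker_eq_bot']
    intro a ha
    by_contra hne
    rw [hf] at ha
    set x := e.symm (Pi.single i a) with hx
    have hxi : x.1 i.1 = a := by rw [hx, he]; simp
    have h1 := hd x x.2 (fun h => hne (by rw [← hxi, h]; rfl))
    refine absurd h1 (not_lt.2 ?_)
    -- the support of `x` lies in `{i} ∪ Pᶜ \ {j}`, which is matched with `Pᶜ` via `i ↦ j`
    refine Nat.card_le_card_of_injective (fun l : {l // x.1 l ≠ 0} =>
      (if h : P l.1 then j else ⟨l.1, h⟩ : {i // ¬ P i})) ?_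
    have hPl : ∀ l : {l // x.1 l ≠ 0}, P l.1 → l.1 = i.1 := by
      intro l hl
      by_contra hli
      apply l.2
      have := he (Pi.single i a) ⟨l.1, hl⟩
      rw [Pi.single_eq_of_ne (fun h => hli (congrArg Subtype.val h))] at this
      exact this
    intro l l' h
    dsimp only at h
    apply Subtype.ext
    split_ifs at h with h1 h2 h2
    · rw [hPl l h1, hPl l' h2]
    · exact absurd (by rw [h] at ha; exact ha) l'.2
    · exact absurd (by rw [← h] at ha; exact ha) l.2
    · exact Subtype.mk.inj h
  have hsum : ∀ (v : {i // P i} → S) (j : {i // ¬ P i}),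
      (e.symm v).1 j.1 = ∑ᶠ i, f (i, j) (v i) := by
    intro v j
    rw [finsum_eq_sum_of_fintype]
    conv_lhs => rw [← Finset.univ_sum_single v, map_sum]
    rw [Submodule.coe_sum, Finset.sum_apply]
    rfl
  refine ⟨fun ij => ⟨f ij, hfinj ij⟩, fun x => ⟨fun hx j => ?_, fun hx => ?_⟩⟩
  · rw [← hsum (fun i => x i) j]
    exact congrArg (fun y : C => y.1 j.1) (e.symm_apply_apply ⟨x, hx⟩).symm
  · have : x = (e.symm (fun i => x i.1)).1 := by
      funext l
      by_cases hl : P l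
      · exact (he (fun i => x i.1) ⟨l, hl⟩).symm
      · rw [hsum (fun i => x i.1) ⟨l, hl⟩]; exact hx ⟨l, hl⟩
    rw [this]
    exact (e.symm _).2

lemma le_hammingD_of_le_minDist {S : Type*} {n : ℕ} {C : Set (Fin n → S)} {d : ℝ}
    (h : d ≤ minDist hammingD C) {x y : Fin n → S} (hx : x ∈ C) (hy : y ∈ C) (hne : x ≠ y) :
    d ≤ hammingD x y := by
  refine h.trans (csInf_le ⟨0, ?_⟩ ⟨x, hx, y, hy, hne, rfl⟩)
  rintro _ ⟨_, _, _, _, _, rfl⟩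
  exact Nat.cast_nonneg _

/-- A basis is a generating family, so it bounds the minimal number of generators. -/
lemma mu_le_finrank {A M : Type*} [CommRing A] [Nontrivial A] [AddCommGroup M] [Module A M]
    (C : Submodule A M) [Module.Free A C] [Module.Finite A C] :
    mu A C ≤ Module.finrank A C := by
  refine Nat.sInf_le ⟨fun i => (Module.finBasis A C i : M), ?_⟩
  have : (Set.range fun i => (Module.finBasis A C i : M))
      = C.subtype '' Set.range (Module.finBasis A C) := by
    rw [← Set.range_comp]; rfl
  rw [this, Submodule.span_image, Module.Basis.span_eq, Submodule.map_top, Submodule.range_subtype]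

lemma natCard_eq_pow_finrank_of_free (A M : Type*) [CommRing A] [Nontrivial A] [AddCommGroup M]
    [Module A M] [Module.Free A M] [Module.Finite A M] :
    Nat.card M = Nat.card A ^ Module.finrank A M := by
  rw [Nat.card_congr (Module.finBasis A M).equivFun.toEquiv, Nat.card_fun, Nat.card_fin]

lemma natCard_fin_lt {n K : ℕ} (h : K ≤ n) : Nat.card {i : Fin n // i.val < K} = K := by
  rw [Nat.card_eq_fintype_card, Fintype.card_subtype, Fin.card_filter_val_lt, min_eq_right h]

lemma natCard_fin_not_lt {n K : ℕ} (h : K ≤ n) :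
    Nat.card {i : Fin n // ¬ i.val < K} = n - K := by
  have := natCard_fin_lt h
  rw [Nat.card_eq_fintype_card] at this ⊢
  rw [Fintype.card_subtype_compl, this, Fintype.card_fin]

/-- A code is determined by the matrix of injective endomorphisms from `exists_graph`. -/
lemma numCodes_le {R S : Type*} [CommRing R] [CommRing S] [Algebra R S] [Finite S] [Nontrivial S]
    (Sbar : Subalgebra R S) {n d t : ℕ} (hd : 1 ≤ d) (hdn : d ≤ n)
    (hcard : Nat.card S = Nat.card Sbar ^ t)
    (b : Fin t → S) (hb : Submodule.span Sbar (Set.range b) = ⊤) :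
    numCodes (n := n) Sbar hammingD (t * (n - d + 1)) d
      ≤ (Nat.card S ^ t - 1) ^ ((n - d + 1) * (d - 1)) := by
  have hP := natCard_fin_lt (n := n) (K := n - d + 1) (by omega)
  have hN := natCard_fin_not_lt (n := n) (K := n - d + 1) (by omega)
  have hF : ∀ C : {C : Submodule Sbar (Fin n → S) // Module.Free Sbar C ∧
      mu Sbar C = t * (n - d + 1) ∧ (d : ℝ) ≤ minDist hammingD (C : Set (Fin n → S))},
      ∃ F : {i : Fin n // i.val < n - d + 1} × {i : Fin n // ¬ i.val < n - d + 1} →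
        {f : S →ₗ[Sbar] S // Function.Injective f},
      ∀ x, x ∈ C.1 ↔ ∀ j : {i : Fin n // ¬ i.val < n - d + 1}, x j =
        ∑ᶠ i : {i : Fin n // i.val < n - d + 1}, (F (i, j)).1 (x i) := by
    rintro ⟨C, hfree, hmu, hdist⟩
    apply exists_graph
    · rw [hP, hcard, ← pow_mul, natCard_eq_pow_finrank_of_free Sbar C, ← hmu]
      exact Nat.pow_le_pow_right Nat.card_pos (mu_le_finrank C)
    · intro x hx hne
      have := le_hammingD_of_le_minDist hdist hx C.zero_mem hne
      have h2 : d ≤ Nat.card {i // x i ≠ 0} := Nat.cast_le.1 this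
      rw [hN]
      omega
  choose F hF using hF
  have hinj : Function.Injective F := by
    intro C C' h
    apply Subtype.ext
    ext x
    rw [hF C, hF C', h]
  have : Finite (S →ₗ[Sbar] S) := DFunLike.finite _
  refine (Nat.card_le_card_of_injective F hinj).trans ?_
  rw [Nat.card_fun, Nat.card_prod, hP, hN, show n - (n - d + 1) = d - 1 by omega]
  exact Nat.pow_le_pow_left (card_injective_le b hb) _

lemma nontrivial_of_isMaximal {A : Type*} [CommRing A] {I : Ideal A} (h : I.IsMaximal) :
    Nontrivial A := by
  by_contra hA
  have := not_nontrivial_iff_subsingleton.1 hA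
  exact h.ne_top (Subsingleton.elim _ _)

theorem stmt16 (s m ℓ q d : ℕ) (hs : 1 ≤ s) (hm : 1 ≤ m) (hl : 1 ≤ ℓ) (hlm : ℓ ∣ m)
    (hq : IsPrimePow q) (hd : 2 ≤ d)
    (R : Type) [CommRing R] [Fintype R] (γ : R)
    (S : Type) [CommRing S] [Fintype S] [Algebra R S]
    (Sbar : Subalgebra R S)
    (hR : IsChainData s q R γ) (hS : IsGaloisExtData m (q ^ m) R S γ)
    (hSb : IsGaloisExtData ℓ (q ^ ℓ) R (↥Sbar) γ)
    :
    Tendsto (fun n : ℕ => densityCodes (n := n) s q ℓ Sbar hammingD (n * m) (m * (n - d + 1) / ℓ) d)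
      (atTop ⊓ 𝓟 {n : ℕ | d ≤ n ∧ ℓ ∣ m * (n - d + 1)}) (𝓝 0) := by
  obtain ⟨t, rfl⟩ := hlm
  obtain ⟨-, -, hγ, -, hRq⟩ := hR
  obtain ⟨hSfree, hSrank, hSmax, -, hSq⟩ := hS
  obtain ⟨hBfree, hBrank, hBmax, -, hBq⟩ := hSb
  have : Nontrivial S := nontrivial_of_isMaximal hSmax
  have : Nontrivial R := (algebraMap R S).domain_nontrivial
  have hq2 := hq.two_le
  have hQ2 : 2 ≤ q ^ ℓ := hq2.trans (Nat.le_self_pow (by omega) q)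
  have hScard : Nat.card S = Nat.card R ^ (ℓ * t) := by
    rw [natCard_eq_pow_finrank_of_free R S, hSrank]
  have hBcard : Nat.card Sbar = Nat.card R ^ ℓ := by
    rw [natCard_eq_pow_finrank_of_free R Sbar, hBrank]
  have hSB : Nat.card S = Nat.card Sbar ^ t := by rw [hScard, hBcard, pow_mul]
  have hRle : Nat.card R ≤ q ^ s := card_le_of_chain hγ hRq
  have hSle : Nat.card S ^ t ≤ (q ^ ℓ) ^ (s * t * t) := by
    rw [hScard]
    calc (Nat.card R ^ (ℓ * t)) ^ t ≤ ((q ^ s) ^ (ℓ * t)) ^ t := by gcongr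
      _ = _ := by simp only [← pow_mul]; ring_nf
  obtain ⟨b, hb⟩ := exists_span (A := Sbar) (S := S) (g := algebraMap R Sbar γ) (s := s)
    (Q := q ^ ℓ) (t := t) (by rw [← map_pow, hγ, map_zero]) hBmax hQ2 hBq
    (by rw [← pow_mul]; exact hSq)
  -- `Q` bounds the number of `S̄`-linear endomorphisms of `S`, since `|S| ≤ q ^ (ℓ t s)`
  set Q : ℕ := (q ^ ℓ) ^ (s * t * t) with hQ
  have hQ1 : 1 ≤ Q := Nat.one_le_pow _ _ (by omega)
  have hQr : (1 : ℝ) ≤ Q := by exact_mod_cast hQ1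
  have hQ0 : (0 : ℝ) < Q := by linarith
  set ρ : ℝ := ((Q : ℝ) - 1) / Q with hρ
  have hρ0 : 0 ≤ ρ := div_nonneg (by linarith) hQ0.le
  have hρ1 : ρ < 1 := by rw [hρ, div_lt_one hQ0]; linarith
  have hlim : Tendsto (fun n : ℕ => ρ ^ (n - d)) (atTop ⊓ 𝓟 {n : ℕ | d ≤ n ∧
      ℓ ∣ ℓ * t * (n - d + 1)}) (𝓝 0) :=
    (((tendsto_pow_atTop_nhds_zero_of_lt_one hρ0 hρ1).comp
      (tendsto_sub_atTop_nat d))).mono_left inf_le_left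
  have hNN0 : ∀ n : ℕ, d ≤ n →
      (Q : ℝ) ^ ((n - d + 1) * (d - 1)) ≤ NN s (q ^ ℓ) ((n * (ℓ * t) / ℓ : ℕ) : ℤ)
        ((ℓ * t * (n - d + 1) / ℓ : ℕ) : ℤ) := by
    intro n hn
    rw [mul_assoc ℓ t, Nat.mul_div_cancel_left _ (by omega), Nat.mul_left_comm n ℓ t,
      Nat.mul_div_cancel_left _ (by omega)]
    have hle : t * (n - d + 1) ≤ n * t := by
      rw [mul_comm n t]; exact Nat.mul_le_mul_left _ (by omega)
    refine le_trans (le_of_eq ?_) (NN_lower s (q ^ ℓ) (n * t) (t * (n - d + 1)) hs hQ2 hle)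
    have hsub : n * t - t * (n - d + 1) = t * (d - 1) := by
      rw [mul_comm n t, ← Nat.mul_sub]; congr 1; omega
    rw [hsub, hQ, Nat.cast_pow, ← pow_mul]
    congr 1
    ring
  refine squeeze_zero' ?_ ?_ hlim
  · rw [eventually_inf_principal]
    refine Eventually.of_forall fun n hn => ?_
    exact div_nonneg (Nat.cast_nonneg _) (le_trans (by positivity) (hNN0 n hn.1))
  · rw [eventually_inf_principal]
    refine Eventually.of_forall fun n hn => ?_
    have hcount : (numCodes (n := n) Sbar hammingD (ℓ * t * (n - d + 1) / ℓ) d : ℝ)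
        ≤ ((Q : ℝ) - 1) ^ ((n - d + 1) * (d - 1)) := by
      rw [mul_assoc ℓ t, Nat.mul_div_cancel_left _ (by omega)]
      have h := numCodes_le Sbar (by omega) hn.1 hSB b hb
      have h2 := h.trans (Nat.pow_le_pow_left (Nat.sub_le_sub_right hSle 1) _)
      calc _ ≤ (((Q - 1) ^ ((n - d + 1) * (d - 1)) : ℕ) : ℝ) := by exact_mod_cast h2
        _ = _ := by push_cast [hQ1]; rfl
    calc densityCodes (n := n) s q ℓ Sbar hammingD (n * (ℓ * t)) (ℓ * t * (n - d + 1) / ℓ) d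
        ≤ ((Q : ℝ) - 1) ^ ((n - d + 1) * (d - 1)) / (Q : ℝ) ^ ((n - d + 1) * (d - 1)) :=
          div_le_div₀ (pow_nonneg (by linarith) _) hcount (by positivity) (hNN0 n hn.1)
      _ = ρ ^ ((n - d + 1) * (d - 1)) := by rw [hρ, div_pow]
      _ ≤ ρ ^ (n - d) := by
          refine pow_le_pow_of_le_one hρ0 hρ1.le ?_
          exact (Nat.le_succ _).trans (Nat.le_mul_of_pos_right _ (by omega))
end
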